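/- If X is an E-valued random variable with density p(·;θ*) with respect to μ, then for every θ' ∈ Θ the single-observation composite likelihood ratio has expectation at most one: E[p_{α,β}(X;θ')/p_{α,β}(X;θ*)] ≤ 1, where the ratio is taken to be 0 when the denominator is 0. -/

import Mathlib

open MeasureTheory ENNReal
open scoped BigOperators Classical

noncomputable section

/-- Division in `ℝ≥0∞` with the convention that the ratio is `0` when the
denominator is `0`. -/
def safeDiv (a b : ℝ≥0∞) : ℝ≥0∞ := if b = 0 then 0 else a / b

variable {d : ℕ} {π : Fin d → Type*} [∀ i, MeasurableSpace (π i)]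

/-- The marginal density on the coordinates in `S`, obtained by integrating a density
out over the coordinates in `[d] \ S` (as a function of the full vector, depending only
on the coordinates in `S`). -/
def marginal (μ : ∀ i, Measure (π i)) (S : Finset (Fin d))
    (f : (∀ i, π i) → ℝ≥0∞) : (∀ i, π i) → ℝ≥0∞ :=
  MeasureTheory.lmarginal μ Sᶜ f

/-- The conditional density of the coordinates in `T1` given the coordinates in `T2`,
with the convention that the ratio is `0` when the denominator is `0`. -/
def condDens (μ : ∀ i, Measure (π i)) (T1 T2 : Finset (Fin d))
    (f : (∀ i, π i) → ℝ≥0∞) (x : ∀ i, π i) : ℝ≥0∞ :=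
  safeDiv (marginal μ (T1 ∪ T2) f x) (marginal μ T2 f x)

/-- `𝕊_d`: the nonempty subsets of `[d]`. -/
abbrev Sd (d : ℕ) := {S : Finset (Fin d) // S.Nonempty}

/-- `𝕋_d`: ordered pairs of disjoint nonempty subsets of `[d]`. -/
abbrev Td (d : ℕ) := {T : Finset (Fin d) × Finset (Fin d) //
  T.1.Nonempty ∧ T.2.Nonempty ∧ Disjoint T.1 T.2}

/-- The individual composite likelihood
`p_{α,β}(x;θ) = ∏_S p_S(x_S;θ)^(α_S/γ) ∏_T p(x_{T←}|x_{T→};θ)^(β_T/γ)`,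
where `f = p(·;θ)` is the joint density. -/
def compLik (μ : ∀ i, Measure (π i)) (α : Sd d → ℝ) (β : Td d → ℝ) (γ : ℝ)
    (f : (∀ i, π i) → ℝ≥0∞) (x : ∀ i, π i) : ℝ≥0∞ :=
  (∏ S : Sd d, marginal μ S.1 f x ^ (α S / γ)) *
  (∏ T : Td d, condDens μ T.1.1 T.1.2 f x ^ (β T / γ))

/-!
The composite likelihood is a weighted geometric mean of marginal and conditional densities, and
`safeDiv` commutes with products and nonnegative powers, so the ratio is the weighted geometric mean
of the ratios of the factors. By Hölder's inequality its expectation is at most the weighted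
geometric mean of their expectations, which leaves one factor at a time. For a marginal, integrating
out the other coordinates turns `E[g_S / f_S]` into an integral of `g_S` over `{f_S ≠ 0}`. For a
conditional, integrating out all but the coordinates in `A ∪ B` leaves `f_B(x_B) g(x_A | x_B)`; the
conditional density has mass at most one in `x_A`, and what remains is the integral of `f_B`.
-/

section SafeDiv

lemma safeDiv_of_ne_zero (a : ℝ≥0∞) {b : ℝ≥0∞} (hb : b ≠ 0) : safeDiv a b = a / b :=
  if_neg hb

@[simp]
lemma safeDiv_zero (a : ℝ≥0∞) : safeDiv a 0 = 0 :=
  if_pos rfl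

lemma safeDiv_eq_safeDiv_one_mul (a b : ℝ≥0∞) : safeDiv a b = safeDiv 1 b * a := by
  rcases eq_or_ne b 0 with rfl | hb
  · simp
  · rw [safeDiv_of_ne_zero a hb, safeDiv_of_ne_zero 1 hb, one_div, mul_comm, div_eq_mul_inv]

lemma safeDiv_mul_le (a b : ℝ≥0∞) : safeDiv a b * b ≤ a := by
  rcases eq_or_ne b 0 with rfl | hb
  · simp
  · rw [safeDiv_of_ne_zero a hb, mul_comm]
    exact ENNReal.mul_div_le

lemma safeDiv_safeDiv_mul_le (a b c : ℝ≥0∞) : safeDiv c (safeDiv a b) * a ≤ b * c := by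
  rcases eq_or_ne b 0 with rfl | hb
  · simp
  rw [safeDiv_of_ne_zero a hb]
  rcases eq_or_ne b ⊤ with rfl | hb_top
  · simp
  calc safeDiv c (a / b) * a
      = safeDiv c (a / b) * (a / b) * b := by rw [mul_assoc, ENNReal.div_mul_cancel hb hb_top]
    _ ≤ c * b := by gcongr; exact safeDiv_mul_le c (a / b)
    _ = b * c := mul_comm c b

lemma safeDiv_mul_mul (a a' b b' : ℝ≥0∞) :
    safeDiv (a * a') (b * b') = safeDiv a b * safeDiv a' b' := by
  rcases eq_or_ne b 0 with rfl | hb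
  · simp
  rcases eq_or_ne b' 0 with rfl | hb'
  · simp
  rw [safeDiv_of_ne_zero _ (mul_ne_zero hb hb'), safeDiv_of_ne_zero a hb,
    safeDiv_of_ne_zero a' hb', div_eq_mul_inv, ENNReal.mul_inv (.inl hb) (.inr hb'),
    mul_mul_mul_comm, div_eq_mul_inv, div_eq_mul_inv]

lemma safeDiv_prod {ι : Type*} (s : Finset ι) (a b : ι → ℝ≥0∞) :
    safeDiv (∏ i ∈ s, a i) (∏ i ∈ s, b i) = ∏ i ∈ s, safeDiv (a i) (b i) := by
  induction s using Finset.cons_induction with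
  | empty => simp [safeDiv]
  | cons i s hi ih => simp only [Finset.prod_cons, safeDiv_mul_mul, ih]

lemma safeDiv_rpow (a b : ℝ≥0∞) {w : ℝ} (hw : 0 ≤ w) :
    safeDiv (a ^ w) (b ^ w) = safeDiv a b ^ w := by
  rcases hw.eq_or_lt with rfl | hw_pos
  · simp [safeDiv]
  rcases eq_or_ne b 0 with rfl | hb
  · simp [ENNReal.zero_rpow_of_pos hw_pos]
  have hbw : b ^ w ≠ 0 := by simp [ENNReal.rpow_eq_zero_iff, hb, hw_pos.not_gt]
  rw [safeDiv_of_ne_zero _ hbw, safeDiv_of_ne_zero a hb, ENNReal.div_rpow_of_nonneg _ _ hw]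

lemma safeDiv_prod_rpow {ι : Type*} (s : Finset ι) (a b : ι → ℝ≥0∞) {w : ι → ℝ}
    (hw : ∀ i ∈ s, 0 ≤ w i) :
    safeDiv (∏ i ∈ s, a i ^ w i) (∏ i ∈ s, b i ^ w i) = ∏ i ∈ s, safeDiv (a i) (b i) ^ w i := by
  rw [safeDiv_prod]
  exact Finset.prod_congr rfl fun i hi ↦ safeDiv_rpow (a i) (b i) (hw i hi)

lemma measurable_safeDiv {Y : Type*} [MeasurableSpace Y] {u v : Y → ℝ≥0∞}
    (hu : Measurable u) (hv : Measurable v) : Measurable fun y ↦ safeDiv (u y) (v y) :=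
  Measurable.ite (hv (measurableSet_singleton 0)) measurable_const (hu.div hv)

lemma dependsOn_safeDiv {ι : Type*} {E : ι → Type*} {u v : (∀ i, E i) → ℝ≥0∞} {s : Set ι}
    (hu : DependsOn u s) (hv : DependsOn v s) : DependsOn (fun x ↦ safeDiv (u x) (v x)) s :=
  fun _ _ hxy ↦ congrArg₂ safeDiv (hu hxy) (hv hxy)

end SafeDiv

lemma lintegral_prod_rpow_le_one {Y ι : Type*} [MeasurableSpace Y] {ν : Measure Y} (s : Finset ι)
    {r : ι → Y → ℝ≥0∞} (hr : ∀ i ∈ s, AEMeasurable (r i) ν) {w : ι → ℝ} (hw : ∀ i ∈ s, 0 ≤ w i)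
    (hw_sum : ∑ i ∈ s, w i = 1) (hr_le : ∀ i ∈ s, ∫⁻ y, r i y ∂ν ≤ 1) :
    ∫⁻ y, ∏ i ∈ s, r i y ^ w i ∂ν ≤ 1 :=
  (ENNReal.lintegral_prod_norm_pow_le s hr hw_sum hw).trans <|
    Finset.prod_le_one' fun i hi ↦ ENNReal.rpow_le_one (hr_le i hi) (hw i hi)

lemma lmarginal_mul_of_dependsOn {ι : Type*} [DecidableEq ι] {E : ι → Type*}
    [∀ i, MeasurableSpace (E i)] (μ : ∀ i, Measure (E i)) {s t : Finset ι} (hst : Disjoint s t)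
    {u f : (∀ i, E i) → ℝ≥0∞} (hu : DependsOn u (t : Set ι)) (hf : Measurable f) :
    ∫⋯∫⁻_s, (fun x ↦ u x * f x) ∂μ = fun x ↦ u x * (∫⋯∫⁻_s, f ∂μ) x := by
  ext x
  have u_updateFinset (y : ∀ i : s, E i) : u (Function.updateFinset x s y) = u x :=
    hu fun i hi ↦ by simp [Function.updateFinset, Finset.disjoint_right.mp hst hi]
  simp only [lmarginal, u_updateFinset]
  exact lintegral_const_mul _ (hf.comp measurable_updateFinset)

section Densities

variable (μ : ∀ i, Measure (π i))

lemma dependsOn_marginal (S : Finset (Fin d)) (f : (∀ i, π i) → ℝ≥0∞) :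
    DependsOn (marginal μ S f) (S : Set (Fin d)) :=
  fun _ _ hxy ↦ lmarginal_congr μ f fun i hi ↦ hxy i (by simpa using hi)

lemma marginal_mul_of_dependsOn {S : Finset (Fin d)} {u f : (∀ i, π i) → ℝ≥0∞}
    (hu : DependsOn u (S : Set (Fin d))) (hf : Measurable f) :
    marginal μ S (fun x ↦ u x * f x) = fun x ↦ u x * marginal μ S f x :=
  lmarginal_mul_of_dependsOn μ disjoint_compl_left hu hf

lemma dependsOn_condDens (A B : Finset (Fin d)) (f : (∀ i, π i) → ℝ≥0∞) :
    DependsOn (condDens μ A B f) ((A ∪ B : Finset (Fin d)) : Set (Fin d)) :=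
  dependsOn_safeDiv (dependsOn_marginal μ (A ∪ B) f)
    ((dependsOn_marginal μ B f).mono (by simp))

variable [∀ i, SigmaFinite (μ i)] {f g : (∀ i, π i) → ℝ≥0∞}

lemma measurable_marginal (S : Finset (Fin d)) (hf : Measurable f) : Measurable (marginal μ S f) :=
  hf.lmarginal μ

lemma measurable_condDens (A B : Finset (Fin d)) (hf : Measurable f) :
    Measurable (condDens μ A B f) :=
  measurable_safeDiv (measurable_marginal μ (A ∪ B) hf) (measurable_marginal μ B hf)

lemma lmarginal_marginal_union {A B : Finset (Fin d)} (hAB : Disjoint A B) (hf : Measurable f) :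
    ∫⋯∫⁻_A, marginal μ (A ∪ B) f ∂μ = marginal μ B f := by
  have compl_eq_union : Bᶜ = A ∪ (A ∪ B)ᶜ := by
    ext i
    have : i ∈ A → i ∉ B := fun hi ↦ Finset.disjoint_left.mp hAB hi
    simp only [Finset.mem_union, Finset.mem_compl]
    tauto
  have disjoint_compl : Disjoint A (A ∪ B)ᶜ :=
    disjoint_compl_right.mono_left Finset.subset_union_left
  rw [marginal, marginal, compl_eq_union, lmarginal_union μ f hf disjoint_compl]

lemma lmarginal_condDens_le_one {A B : Finset (Fin d)} (hAB : Disjoint A B) (hf : Measurable f) :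
    ∫⋯∫⁻_A, condDens μ A B f ∂μ ≤ 1 := by
  have condDens_eq_mul : condDens μ A B f =
      fun x ↦ safeDiv 1 (marginal μ B f x) * marginal μ (A ∪ B) f x :=
    funext fun x ↦ safeDiv_eq_safeDiv_one_mul _ _
  have dependsOn_inv : DependsOn (fun x ↦ safeDiv 1 (marginal μ B f x)) (B : Set (Fin d)) :=
    dependsOn_safeDiv (fun _ _ _ ↦ rfl) (dependsOn_marginal μ B f)
  rw [condDens_eq_mul, lmarginal_mul_of_dependsOn μ hAB dependsOn_inv
    (measurable_marginal μ (A ∪ B) hf), lmarginal_marginal_union μ hAB hf]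
  exact fun x ↦ safeDiv_mul_le 1 (marginal μ B f x)

lemma lintegral_withDensity_safeDiv_marginal_le (S : Finset (Fin d)) (hf : Measurable f)
    (hg : Measurable g) :
    ∫⁻ x, safeDiv (marginal μ S g x) (marginal μ S f x) ∂(Measure.pi μ).withDensity f ≤
      ∫⁻ x, g x ∂Measure.pi μ := by
  have ratio_meas := measurable_safeDiv (measurable_marginal μ S hg) (measurable_marginal μ S hf)
  have ratio_dep := dependsOn_safeDiv (dependsOn_marginal μ S g) (dependsOn_marginal μ S f)
  rw [lintegral_withDensity_eq_lintegral_mul _ hf ratio_meas, mul_comm f]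
  refine lintegral_le_of_lmarginal_le Sᶜ (ratio_meas.mul hf) hg ?_
  refine (marginal_mul_of_dependsOn μ ratio_dep hf).trans_le fun x ↦ ?_
  exact safeDiv_mul_le (marginal μ S g x) (marginal μ S f x)

lemma lintegral_withDensity_safeDiv_condDens_le {A B : Finset (Fin d)} (hAB : Disjoint A B)
    (hf : Measurable f) (hg : Measurable g) :
    ∫⁻ x, safeDiv (condDens μ A B g x) (condDens μ A B f x) ∂(Measure.pi μ).withDensity f ≤
      ∫⁻ x, f x ∂Measure.pi μ := by
  set ratio := fun x ↦ safeDiv (condDens μ A B g x) (condDens μ A B f x)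
  have ratio_meas : Measurable ratio :=
    measurable_safeDiv (measurable_condDens μ A B hg) (measurable_condDens μ A B hf)
  have ratio_dep : DependsOn ratio ((A ∪ B : Finset (Fin d)) : Set (Fin d)) :=
    dependsOn_safeDiv (dependsOn_condDens μ A B g) (dependsOn_condDens μ A B f)
  rw [lintegral_withDensity_eq_lintegral_mul _ hf ratio_meas, mul_comm f]
  refine lintegral_le_of_lmarginal_le Bᶜ (ratio_meas.mul hf) hf ?_
  calc marginal μ B (ratio * f)
      = ∫⋯∫⁻_A, (fun x ↦ ratio x * marginal μ (A ∪ B) f x) ∂μ := by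
        rw [← lmarginal_marginal_union μ hAB (ratio_meas.mul hf)]
        exact congrArg (lmarginal μ A) (marginal_mul_of_dependsOn μ ratio_dep hf)
    _ ≤ ∫⋯∫⁻_A, (fun x ↦ marginal μ B f x * condDens μ A B g x) ∂μ :=
        lmarginal_mono fun _ ↦ safeDiv_safeDiv_mul_le _ _ _
    _ = fun x ↦ marginal μ B f x * (∫⋯∫⁻_A, condDens μ A B g ∂μ) x :=
        lmarginal_mul_of_dependsOn μ hAB (dependsOn_marginal μ B f)
          (measurable_condDens μ A B hg)
    _ ≤ marginal μ B f :=
        fun x ↦ mul_le_of_le_one_right' (lmarginal_condDens_le_one μ hAB hg x)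

end Densities

section CompositeLikelihood

/-- The factors of the composite likelihood: marginal densities, indexed by `Sd d`, and conditional
densities, indexed by `Td d`, put into a single family so that Hölder's inequality applies to all of
them at once. -/
def compLikFactor (μ : ∀ i, Measure (π i)) (f : (∀ i, π i) → ℝ≥0∞) :
    Sd d ⊕ Td d → (∀ i, π i) → ℝ≥0∞ :=
  Sum.elim (fun S ↦ marginal μ S.1 f) (fun T ↦ condDens μ T.1.1 T.1.2 f)

/-- The exponents `α_S / γ` and `β_T / γ` of the composite likelihood, indexed like
`compLikFactor`. -/
def compLikWeight (α : Sd d → ℝ) (β : Td d → ℝ) (γ : ℝ) : Sd d ⊕ Td d → ℝ :=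
  Sum.elim (fun S ↦ α S / γ) (fun T ↦ β T / γ)

variable {α : Sd d → ℝ} {β : Td d → ℝ} {γ : ℝ}

lemma compLikWeight_nonneg (hα : ∀ S, 0 ≤ α S) (hβ : ∀ T, 0 ≤ β T) (hγ : 0 ≤ γ)
    (k : Sd d ⊕ Td d) : 0 ≤ compLikWeight α β γ k := by
  rcases k with S | T
  exacts [div_nonneg (hα S) hγ, div_nonneg (hβ T) hγ]

lemma sum_compLikWeight (hγ : γ = ∑ S, α S + ∑ T, β T) (hγ_ne : γ ≠ 0) :
    ∑ k, compLikWeight α β γ k = 1 := by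
  simp only [compLikWeight, Fintype.sum_sum_type, Sum.elim_inl, Sum.elim_inr]
  rw [← Finset.sum_div, ← Finset.sum_div, ← add_div, ← hγ, div_self hγ_ne]

variable (μ : ∀ i, Measure (π i))

lemma compLik_eq_prod (f : (∀ i, π i) → ℝ≥0∞) (x : ∀ i, π i) :
    compLik μ α β γ f x = ∏ k, compLikFactor μ f k x ^ compLikWeight α β γ k := by
  simp only [compLik, compLikFactor, compLikWeight, Fintype.prod_sum_type, Sum.elim_inl,
    Sum.elim_inr]

variable [∀ i, SigmaFinite (μ i)] {f g : (∀ i, π i) → ℝ≥0∞}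

lemma measurable_compLikFactor (hf : Measurable f) (k : Sd d ⊕ Td d) :
    Measurable (compLikFactor μ f k) := by
  rcases k with S | T
  exacts [measurable_marginal μ S.1 hf, measurable_condDens μ T.1.1 T.1.2 hf]

lemma measurable_compLik (hf : Measurable f) : Measurable (compLik μ α β γ f) := by
  rw [funext (compLik_eq_prod μ f)]
  exact Finset.measurable_prod _ fun k _ ↦ (measurable_compLikFactor μ hf k).pow_const _

lemma lintegral_withDensity_safeDiv_compLikFactor_le_one (hf : Measurable f) (hg : Measurable g)
    (hf_le : ∫⁻ x, f x ∂Measure.pi μ ≤ 1) (hg_le : ∫⁻ x, g x ∂Measure.pi μ ≤ 1)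
    (k : Sd d ⊕ Td d) :
    ∫⁻ x, safeDiv (compLikFactor μ g k x) (compLikFactor μ f k x) ∂(Measure.pi μ).withDensity f ≤
      1 := by
  rcases k with S | T
  · exact (lintegral_withDensity_safeDiv_marginal_le μ S.1 hf hg).trans hg_le
  · exact (lintegral_withDensity_safeDiv_condDens_le μ T.2.2.2 hf hg).trans hf_le

theorem single_obs_CL_ratio_expectation_le_one_general (hf : Measurable f) (hg : Measurable g)
    (hf_le : ∫⁻ x, f x ∂Measure.pi μ ≤ 1) (hg_le : ∫⁻ x, g x ∂Measure.pi μ ≤ 1)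
    (hα : ∀ S, 0 ≤ α S) (hβ : ∀ T, 0 ≤ β T)
    (hγ : γ = ∑ S, α S + ∑ T, β T) (hγ_pos : 0 < γ)
    {Ω : Type*} [MeasurableSpace Ω] {P : Measure Ω} {X : Ω → ∀ i, π i} (hX : AEMeasurable X P)
    (hlaw : P.map X = (Measure.pi μ).withDensity f) :
    ∫⁻ ω, safeDiv (compLik μ α β γ g (X ω)) (compLik μ α β γ f (X ω)) ∂P ≤ 1 := by
  have hw := compLikWeight_nonneg hα hβ hγ_pos.le
  have ratio_meas := measurable_safeDiv (measurable_compLik (α := α) (β := β) (γ := γ) μ hg)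
    (measurable_compLik (α := α) (β := β) (γ := γ) μ hf)
  calc ∫⁻ ω, safeDiv (compLik μ α β γ g (X ω)) (compLik μ α β γ f (X ω)) ∂P
      = ∫⁻ x, safeDiv (compLik μ α β γ g x) (compLik μ α β γ f x)
          ∂(Measure.pi μ).withDensity f := by
        rw [← hlaw, lintegral_map' ratio_meas.aemeasurable hX]
    _ = ∫⁻ x, ∏ k, safeDiv (compLikFactor μ g k x) (compLikFactor μ f k x) ^ compLikWeight α β γ k
          ∂(Measure.pi μ).withDensity f := by
        simp only [compLik_eq_prod, safeDiv_prod_rpow _ _ _ fun k _ ↦ hw k]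
    _ ≤ 1 := lintegral_prod_rpow_le_one _
        (fun k _ ↦ (measurable_safeDiv (measurable_compLikFactor μ hg k)
          (measurable_compLikFactor μ hf k)).aemeasurable)
        (fun k _ ↦ hw k) (sum_compLikWeight hγ hγ_pos.ne')
        (fun k _ ↦ lintegral_withDensity_safeDiv_compLikFactor_le_one μ hf hg hf_le hg_le k)

end CompositeLikelihood

/-- If `X` is an `E`-valued random variable with density `p(·;θ*)`
with respect to `μ`, then for every `θ' ∈ Θ` the single-observation composite
likelihood ratio has expectation at most one:
`E[p_{α,β}(X;θ') / p_{α,β}(X;θ*)] ≤ 1`, the ratio being `0` when the denominator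
is `0`. -/
theorem single_obs_CL_ratio_expectation_le_one
    {d : ℕ} (hd : 1 ≤ d)
    {π : Fin d → Type*} [∀ i, MeasurableSpace (π i)]
    (μ : ∀ i, Measure (π i)) [∀ i, SigmaFinite (μ i)]
    {Θ : Type*} [MeasurableSpace Θ]
    (p : Θ → (∀ i, π i) → ℝ≥0∞)
    (hp_meas : Measurable (Function.uncurry p))
    (hp_prob : ∀ θ : Θ, ∫⁻ x, p θ x ∂(Measure.pi μ) = 1)
    (α : Sd d → ℝ) (β : Td d → ℝ)
    (hα : ∀ S, 0 ≤ α S) (hβ : ∀ T, 0 ≤ β T)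
    (γ : ℝ) (hγ : γ = ∑ S, α S + ∑ T, β T) (hγpos : 0 < γ)
    {Ω : Type*} [MeasurableSpace Ω]
    (Pr : Measure Ω) [IsProbabilityMeasure Pr]
    (θstar : Θ)
    -- `X` is an `E`-valued random variable with density `p(·;θ*)` w.r.t. `μ`
    (X : Ω → ∀ i, π i) (hX : Measurable X)
    (hlaw : Measure.map X Pr = (Measure.pi μ).withDensity (p θstar))
    (θ' : Θ) :
    (∫⁻ ω, safeDiv (compLik μ α β γ (p θ') (X ω))
        (compLik μ α β γ (p θstar) (X ω)) ∂Pr) ≤ 1 := by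
  have hp (θ : Θ) : Measurable (p θ) := hp_meas.of_uncurry_left
  exact single_obs_CL_ratio_expectation_le_one_general μ (hp θstar) (hp θ') (hp_prob θstar).le
    (hp_prob θ').le hα hβ hγ hγpos hX.aemeasurable hlaw
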